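/- Let G = (𝒩, w) be a closed octagonal graph and let i, j ∈ 𝒩 be such that i ≠ j̄ and 2·w(i,j) ≥ w(i,ī) + w(j̄,j). Define the graph G_s = (𝒩, w_s) by w_s(h₁,h₂) = (w(i,ī) + w(j̄,j))/2 if (h₁,h₂) ∈ {(i,j), (j̄,ī)}, and w_s(h₁,h₂) = w(h₁,h₂) otherwise. Then G_s is consistent and, letting w_s★ be its shortest-path closure (the pointwise supremum of all closed graphs ⊴ w_s), for all z₁, z₂ ∈ 𝒩 at least one of the following holds: (a) w_s★(z₁,z₂) = w(z₁,z₂); (b) 2·w_s★(z₁,z₂) ≥ w(z₁, z̄₁) + w(z̄₂, z₂). -/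

import Mathlib

/-- Extended rationals: ℚ ∪ {+∞}. -/
abbrev Qinf := WithTop ℚ

/-- Weight of a path (list of nodes): sum of the weights of its arcs. -/
def pathWeight {N : Type*} (w : N → N → Qinf) : List N → Qinf
  | [] => 0
  | [_] => 0
  | a :: b :: l => w a b + pathWeight w (b :: l)

/-- A proper cycle: at least two arcs, first node equals last node,
    consecutive nodes distinct. -/
def IsProperCycle {N : Type*} (l : List N) : Prop :=
  3 ≤ l.length ∧ l.head? = l.getLast? ∧ l.Chain' (· ≠ ·)

/-- A graph is consistent if it has no proper cycle of negative weight. -/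
def Consistent {N : Type*} (w : N → N → Qinf) : Prop :=
  ∀ l : List N, IsProperCycle l → 0 ≤ pathWeight w l

/-- A consistent graph is closed if self-loops have weight 0 and the
    triangle inequality holds. -/
def ClosedG {N : Type*} (w : N → N → Qinf) : Prop :=
  Consistent w ∧ (∀ i, w i i = 0) ∧ ∀ i j k, w i j ≤ w i k + w k j

/-- The "bar" involution on nodes: ī = i+1 for even i, ī = i-1 for odd i. -/
def bar {n : ℕ} (i : Fin (2 * n)) : Fin (2 * n) :=
  if _h : i.val % 2 = 0 then ⟨i.val + 1, by have := i.isLt; omega⟩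
  else ⟨i.val - 1, by have := i.isLt; omega⟩

/-- Coherence: w(i,j) = w(j̄,ī). -/
def Coherent {n : ℕ} (w : Fin (2 * n) → Fin (2 * n) → Qinf) : Prop :=
  ∀ i j, w i j = w (bar j) (bar i)

/-- An octagonal graph: consistent and coherent. -/
def Octagonal {n : ℕ} (w : Fin (2 * n) → Fin (2 * n) → Qinf) : Prop :=
  Consistent w ∧ Coherent w

/-- Pointwise order on graphs. -/
def GLe {n : ℕ} (w₁ w₂ : Fin (2 * n) → Fin (2 * n) → Qinf) : Prop :=
  ∀ i j, w₁ i j ≤ w₂ i j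

/-- Halving on ℚ∞ (with +∞/2 = +∞). -/
def half (x : Qinf) : Qinf := x.map (fun q => q / 2)

/-- Floored halving on ℚ∞ (with ⌊+∞/2⌋ = +∞). -/
def fhalf (x : Qinf) : Qinf := x.map (fun q => ((⌊q / 2⌋ : ℤ) : ℚ))

/-- Integer weights: every weight is an integer or +∞. -/
def IntWeights {n : ℕ} (w : Fin (2 * n) → Fin (2 * n) → Qinf) : Prop :=
  ∀ i j, w i j = ⊤ ∨ ∃ d : ℤ, w i j = ((d : ℚ) : Qinf)

/-- A strongly closed octagonal graph. -/
def StronglyClosed {n : ℕ} (w : Fin (2 * n) → Fin (2 * n) → Qinf) : Prop :=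
  Octagonal w ∧ ClosedG w ∧ ∀ i j, 2 * w i j ≤ w i (bar i) + w (bar j) j

/-- A tightly closed integer octagonal graph. -/
def TightlyClosed {n : ℕ} (w : Fin (2 * n) → Fin (2 * n) → Qinf) : Prop :=
  IntWeights w ∧ StronglyClosed w ∧
    ∀ i, w i (bar i) = ⊤ ∨ ∃ d : ℤ, w i (bar i) = (((2 * d : ℤ) : ℚ) : Qinf)


theorem my_two_mul (x : Qinf) : 2 * x = x + x := by
  induction x using WithTop.recTopCoe with
  | top => rw [WithTop.mul_top (by norm_num)]; rfl
  | coe q =>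
    have : (2 : Qinf) = ((2 : ℚ) : Qinf) := rfl
    rw [this, ← WithTop.coe_mul, ← WithTop.coe_add, two_mul]

theorem my_half (x : Qinf) : half x + half x = x := by
  induction x using WithTop.recTopCoe with
  | top => rfl
  | coe q =>
    have : half ((q : ℚ) : Qinf) = ((q / 2 : ℚ) : Qinf) := rfl
    rw [this, ← WithTop.coe_add, add_halves]

theorem my_le_of_double {x y : Qinf} (h : x + x ≤ y + y) : x ≤ y := by
  induction y using WithTop.recTopCoe with
  | top => exact le_top
  | coe r =>
    induction x using WithTop.recTopCoe with
    | top =>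
      rw [← WithTop.coe_add] at h
      exact absurd (top_le_iff.1 h) (WithTop.coe_ne_top)
    | coe q =>
      rw [← WithTop.coe_add, ← WithTop.coe_add, WithTop.coe_le_coe] at h
      rw [WithTop.coe_le_coe]
      linarith

theorem my_bar_bar {n : ℕ} (i : Fin (2 * n)) : bar (bar i) = i := by
  have hv : ∀ k : Fin (2 * n), (bar k).val = if k.val % 2 = 0 then k.val + 1 else k.val - 1 := by
    intro k
    unfold bar
    split_ifs <;> rfl
  apply Fin.ext
  rw [hv, hv]
  split_ifs <;> omega

theorem my_path_ge {N : Type*} (w : N → N → Qinf) (h0 : ∀ i, w i i = 0)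
    (ht : ∀ i j k, w i j ≤ w i k + w k j) :
    ∀ (l : List N) (a b : N), l.head? = some a → l.getLast? = some b →
      w a b ≤ pathWeight w l
  | [], a, b, h, _ => by simp at h
  | [x], a, b, h, h' => by
    simp at h h'
    subst h; subst h'
    simp [pathWeight, h0]
  | x :: y :: l, a, b, h, h' => by
    simp only [List.head?_cons, Option.some.injEq] at h
    subst h
    rw [List.getLast?_cons_cons] at h'
    exact (ht x b y).trans (add_le_add le_rfl
      (my_path_ge w h0 ht (y :: l) y b rfl h'))

theorem my_consistent {N : Type*} (w : N → N → Qinf) (h0 : ∀ i, w i i = 0)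
    (ht : ∀ i j k, w i j ≤ w i k + w k j) : Consistent w := by
  rintro l ⟨hl, hh, -⟩
  match l, hl with
  | x :: l, _ =>
    rw [← h0 x]
    exact my_path_ge w h0 ht _ x x rfl (by rw [← hh]; rfl)

theorem my_path_mono {N : Type*} (w w' : N → N → Qinf) (h : ∀ a b, w a b ≤ w' a b) :
    ∀ l : List N, pathWeight w l ≤ pathWeight w' l
  | [] => le_rfl
  | [_] => le_rfl
  | a :: b :: l => add_le_add (h a b) (my_path_mono w w' h (b :: l))

/-- Doubled weight of a path using the new arc once. -/
theorem my_bound {n : ℕ} (w : Fin (2 * n) → Fin (2 * n) → Qinf)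
    (hco : Coherent w) (ht : ∀ i j k, w i j ≤ w i k + w k j)
    (i j : Fin (2 * n)) (c : Qinf) (hc : c + c = w i (bar i) + w (bar j) j)
    (a b : Fin (2 * n)) :
    w a (bar a) + w (bar b) b ≤ (w a i + c + w j b) + (w a i + c + w j b) := by
  have e1 : w (bar i) (bar a) = w a i := (hco a i).symm
  have e2 : w (bar b) (bar j) = w j b := (hco j b).symm
  have t1 : w a (bar a) ≤ w a i + (w i (bar i) + w a i) := by
    refine (ht _ _ i).trans (add_le_add le_rfl ((ht _ _ (bar i)).trans ?_))
    rw [e1]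
  have t2 : w (bar b) b ≤ w j b + (w (bar j) j + w j b) := by
    refine (ht _ _ (bar j)).trans ?_
    rw [e2]
    exact add_le_add le_rfl (ht _ _ j)
  refine (add_le_add t1 t2).trans (le_of_eq ?_)
  calc _ = w a i + w a i + (w i (bar i) + w (bar j) j) + (w j b + w j b) := by abel
    _ = _ := by rw [← hc]; abel

/-- Two consecutive uses of the two distinct new arcs are redundant. -/
theorem my_twice {n : ℕ} (w : Fin (2 * n) → Fin (2 * n) → Qinf)
    (h0 : ∀ i, w i i = 0) (ht : ∀ i j k, w i j ≤ w i k + w k j)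
    (i j : Fin (2 * n)) (c : Qinf) (hc : c + c = w i (bar i) + w (bar j) j)
    (a b k : Fin (2 * n)) :
    w a b ≤ (w a i + c + w j k) + (w k (bar j) + c + w (bar i) b) := by
  have t1 : w a b ≤ w a i + (w i (bar i) + w (bar i) b) :=
    (ht _ _ i).trans (add_le_add le_rfl (ht _ _ (bar i)))
  have t2 : 0 ≤ w (bar j) j + (w j k + w k (bar j)) := by
    rw [← h0 (bar j)]
    exact (ht _ _ j).trans (add_le_add le_rfl (ht _ _ k))
  have := add_le_add t1 t2
  rw [add_zero] at this
  refine this.trans (le_of_eq ?_)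
  calc _ = w a i + (w i (bar i) + w (bar j) j) + w j k + w k (bar j) + w (bar i) b := by abel
    _ = _ := by rw [← hc]; abel

/-- Two uses of the same new arc are redundant. -/
theorem my_same {n : ℕ} (w : Fin (2 * n) → Fin (2 * n) → Qinf)
    (i j : Fin (2 * n)) (c : Qinf) (a b k : Fin (2 * n))
    (hk : 0 ≤ w k i + c + w j k) :
    w a i + c + w j b ≤ (w a i + c + w j k) + (w k i + c + w j b) := by
  have := add_le_add (le_refl (w a i + c + w j b)) hk
  rw [add_zero] at this
  refine this.trans (le_of_eq ?_)
  abel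

/-- After one application of the strong-coherence inference rule
    to a closed octagonal graph, every entry of the shortest-path closure of
    the resulting graph either is unchanged or satisfies the strong-coherence
    lower bound. -/
theorem closed_to_one_step_strong_coherence
    {n : ℕ} (hn : 1 ≤ n) (w : Fin (2 * n) → Fin (2 * n) → Qinf)
    (hoct : Octagonal w) (hcl : ClosedG w)
    (i j : Fin (2 * n)) (hij : i ≠ bar j)
    (hge : w i (bar i) + w (bar j) j ≤ 2 * w i j)
    (ws : Fin (2 * n) → Fin (2 * n) → Qinf)
    (hws : ∀ h₁ h₂, ws h₁ h₂ =
      if (h₁ = i ∧ h₂ = j) ∨ (h₁ = bar j ∧ h₂ = bar i)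
      then half (w i (bar i) + w (bar j) j)
      else w h₁ h₂)
    (wsstar : Fin (2 * n) → Fin (2 * n) → Qinf)
    (hstar : ∀ a b, IsLUB
      {q : Qinf | ∃ w' : Fin (2 * n) → Fin (2 * n) → Qinf,
        ClosedG w' ∧ GLe w' ws ∧ q = w' a b} (wsstar a b)) :
    Consistent ws ∧
      ∀ z₁ z₂ : Fin (2 * n),
        wsstar z₁ z₂ = w z₁ z₂ ∨
          w z₁ (bar z₁) + w (bar z₂) z₂ ≤ 2 * wsstar z₁ z₂ := by
  obtain ⟨-, hco⟩ := hoct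
  obtain ⟨-, h0, ht⟩ := hcl
  set c := half (w i (bar i) + w (bar j) j) with hcdef
  have hc : c + c = w i (bar i) + w (bar j) j := my_half _
  have hc' : c + c = w (bar j) (bar (bar j)) + w (bar (bar i)) (bar i) := by
    rw [my_bar_bar, my_bar_bar, hc, add_comm]
  have hci : c ≤ w i j := my_le_of_double (by rw [hc, ← my_two_mul]; exact hge)
  have hsw : ∀ a b, ws a b ≤ w a b := by
    intro a b
    rw [hws]
    split_ifs with h
    · rcases h with ⟨rfl, rfl⟩ | ⟨rfl, rfl⟩
      · exact hci
      · rw [← hco]; exact hci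
    · exact le_rfl
  have bp := my_bound w hco ht i j c hc
  have bq := my_bound w hco ht (bar j) (bar i) c hc'
  have np : ∀ k, 0 ≤ w k i + c + w j k := by
    intro k
    apply my_le_of_double
    refine le_trans ?_ (bp k k)
    rw [add_zero, ← h0 k]
    exact ht _ _ _
  have nq : ∀ k, 0 ≤ w k (bar j) + c + w (bar i) k := by
    intro k
    apply my_le_of_double
    refine le_trans ?_ (bq k k)
    rw [add_zero, ← h0 k]
    exact ht _ _ _
  have tpq := my_twice w h0 ht i j c hc
  have tqp := my_twice w h0 ht (bar j) (bar i) c hc'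
  rw [my_bar_bar, my_bar_bar] at tqp
  let v : Fin (2 * n) → Fin (2 * n) → Qinf := fun a b =>
    min (w a b) (min (w a i + c + w j b) (w a (bar j) + c + w (bar i) b))
  have v1 : ∀ a b, v a b ≤ w a b := fun a b => min_le_left _ _
  have v2 : ∀ a b, v a b ≤ w a i + c + w j b := fun a b =>
    (min_le_right _ _).trans (min_le_left _ _)
  have v3 : ∀ a b, v a b ≤ w a (bar j) + c + w (bar i) b := fun a b =>
    (min_le_right _ _).trans (min_le_right _ _)
  have vc : ∀ a b, v a b = w a b ∨ v a b = w a i + c + w j b ∨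
      v a b = w a (bar j) + c + w (bar i) b := by
    intro a b
    rcases min_choice (w a b) (min (w a i + c + w j b) (w a (bar j) + c + w (bar i) b)) with h | h
    · exact Or.inl h
    · right
      rcases min_choice (w a i + c + w j b) (w a (bar j) + c + w (bar i) b) with h' | h'
      · exact Or.inl (h.trans h')
      · exact Or.inr (h.trans h')
  have vd : ∀ a, v a a = 0 := by
    intro a
    refine le_antisymm ((v1 a a).trans (h0 a).le) ?_
    exact le_min (h0 a).ge (le_min (np a) (nq a))
  have left : ∀ (a b k x y : Fin (2 * n)),
      w a x + c + w y b ≤ w a k + (w k x + c + w y b) := by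
    intro a b k x y
    rw [← add_assoc, ← add_assoc]
    exact add_le_add (add_le_add (ht _ _ _) le_rfl) le_rfl
  have right : ∀ (a b k x y : Fin (2 * n)),
      w a x + c + w y b ≤ (w a x + c + w y k) + w k b := by
    intro a b k x y
    rw [add_assoc (w a x + c)]
    exact add_le_add le_rfl (ht _ _ _)
  have vt : ∀ a b k, v a b ≤ v a k + v k b := by
    intro a b k
    rcases vc a k with h | h | h <;> rcases vc k b with h' | h' | h' <;> rw [h, h']
    · exact (v1 a b).trans (ht _ _ _)
    · exact (v2 a b).trans (left _ _ _ _ _)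
    · exact (v3 a b).trans (left _ _ _ _ _)
    · exact (v2 a b).trans (right _ _ _ _ _)
    · exact (v2 a b).trans (my_same w i j c a b k (np k))
    · exact (v1 a b).trans (tpq a b k)
    · exact (v3 a b).trans (right _ _ _ _ _)
    · exact (v1 a b).trans (tqp a b k)
    · exact (v3 a b).trans (my_same w _ _ c a b k (nq k))
  have vcons : Consistent v := my_consistent v vd vt
  have vs : ∀ a b, v a b ≤ ws a b := by
    intro a b
    rw [hws]
    split_ifs with h
    · rcases h with ⟨rfl, rfl⟩ | ⟨rfl, rfl⟩
      · refine (v2 _ _).trans ?_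
        rw [h0, h0, zero_add, add_zero]
      · refine (v3 _ _).trans ?_
        rw [h0, h0, zero_add, add_zero]
    · exact v1 a b
  refine ⟨fun l hl => (vcons l hl).trans (my_path_mono v ws vs l), fun z₁ z₂ => ?_⟩
  have hle : wsstar z₁ z₂ ≤ w z₁ z₂ := by
    refine (hstar z₁ z₂).2 ?_
    rintro q ⟨w', -, hg, rfl⟩
    exact (hg _ _).trans (hsw _ _)
  have hvle : v z₁ z₂ ≤ wsstar z₁ z₂ :=
    (hstar z₁ z₂).1 ⟨v, ⟨vcons, vd, vt⟩, vs, rfl⟩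
  rcases vc z₁ z₂ with h | h | h
  · left
    exact le_antisymm hle (h ▸ hvle)
  · right
    rw [my_two_mul]
    refine (bp z₁ z₂).trans ?_
    rw [← h]
    exact add_le_add hvle hvle
  · right
    rw [my_two_mul]
    refine (bq z₁ z₂).trans ?_
    rw [← h]
    exact add_le_add hvle hvle
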